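/- Let k ≥ 0 be a finite integer. For every finite colouring of the set of all k-parameter words of finite length over the empty alphabet, there exists an infinite ω-parameter word W such that the set {W(U) : U a k-parameter word of finite length} is monochromatic. -/

import Mathlib

/-- A `k`-parameter word of finite length over the empty alphabet, recorded as the list
of parameter indices at each position: all indices are `< k`, every index `< k` occurs,
and before every occurrence of `λ_j` there is an occurrence of `λ_i` for each `i < j`
(first occurrences come in increasing order). -/
def IsPWord0 (k : ℕ) (w : List ℕ) : Prop :=
  (∀ i ∈ w, i < k) ∧ (∀ i < k, i ∈ w) ∧
  (∀ i j : ℕ, i < j → ∀ p : Fin w.length, w.get p = j →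
    ∃ q : Fin w.length, q < p ∧ w.get q = i)

/-- An infinite `ω`-parameter word over the empty alphabet: every parameter occurs, with
first occurrences in increasing order of index. -/
def InfPW0 (W : ℕ → ℕ) : Prop :=
  (∀ i, ∃ p, W p = i) ∧ ∀ i j, i < j → ∀ p, W p = j → ∃ q, q < p ∧ W q = i

/-- Substitution `W(u)`: position `p` receives `u_{W p}`, truncated just before the first
position carrying a parameter of index `≥ |u|`. -/
def substInf0 (W : ℕ → ℕ) (u : List ℕ) (h : ∃ p, u.length ≤ W p) : List ℕ :=
  (List.range (Nat.find h)).map fun p => u.getD (W p) 0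

namespace CS

open Filter

attribute [local instance] Ultrafilter.mul Ultrafilter.semigroup

/-- A compact right topological semigroup has a minimal nonempty closed left ideal; idempotents
in it are right identities for it. -/
theorem exists_left_ideal {M : Type*} [Nonempty M] [Semigroup M] [TopologicalSpace M]
    [CompactSpace M] [T2Space M] (hc : ∀ r : M, Continuous (· * r)) :
    ∃ L : Set M, L.Nonempty ∧ (∀ x, ∀ y ∈ L, x * y ∈ L) ∧
      ∀ e ∈ L, e * e = e → ∀ z ∈ L, z * e = z := by
  let S : Set (Set M) := {N | IsClosed N ∧ N.Nonempty ∧ ∀ x, ∀ y ∈ N, x * y ∈ N}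
  obtain ⟨L, hL⟩ := zorn_superset S (by
    intro c hcS hchain
    rcases c.eq_empty_or_nonempty with rfl | hne
    · exact ⟨Set.univ, ⟨isClosed_univ, Set.univ_nonempty, fun _ _ _ => trivial⟩, by simp⟩
    · refine ⟨⋂₀ c, ⟨isClosed_sInter fun t ht => (hcS ht).1, ?_, ?_⟩, fun s hs =>
        Set.sInter_subset_of_mem hs⟩
      · have : Nonempty c := hne.to_subtype
        apply IsCompact.nonempty_sInter_of_directed_nonempty_isCompact_isClosed
        · intro a ha b hb
          rcases hchain.total ha hb with h | h
          · exact ⟨a, ha, subset_rfl, h⟩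
          · exact ⟨b, hb, h, subset_rfl⟩
        · exact fun U hU => (hcS hU).2.1
        · exact fun U hU => (hcS hU).1.isCompact
        · exact fun U hU => (hcS hU).1
      · intro x y hy t ht
        exact (hcS ht).2.2 x y (hy t ht))
  obtain ⟨⟨hcl, hne, hid⟩, hmin⟩ := hL
  refine ⟨L, hne, hid, ?_⟩
  intro e he hee z hz
  have hsub : (· * e) '' L ⊆ L := by
    rintro _ ⟨a, _, rfl⟩
    exact hid a e he
  have hmem : (· * e) '' L ∈ S := by
    refine ⟨(hcl.isCompact.image (hc e)).isClosed, hne.image _, ?_⟩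
    rintro x _ ⟨a, ha, rfl⟩
    exact ⟨x * a, hid x a ha, mul_assoc _ _ _⟩
  obtain ⟨a, _, rfl⟩ := hmin hmem hsub hz
  change a * e * e = a * e
  rw [mul_assoc, hee]

theorem map_mul_uf {M N : Type*} [Mul M] [Mul N] (f : M → N) (hf : ∀ a b, f (a * b) = f a * f b)
    (U V : Ultrafilter M) : (U * V).map f = U.map f * V.map f := by
  apply Ultrafilter.coe_inj.mp
  apply Filter.ext'
  intro p
  change (∀ᶠ m in U, ∀ᶠ m' in V, p (f (m * m'))) ↔ ∀ᶠ m in U, ∀ᶠ m' in V, p (f m * f m')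
  simp only [hf]

/-- `sb` as a map of free monoids. -/
def sbm {A : Type*} (a : A) (w : FreeMonoid (Option A)) : FreeMonoid A :=
  FreeMonoid.map (fun o : Option A => o.getD a) w

theorem exists_family (A : Type) :
    ∃ y : Ultrafilter (FreeMonoid (Option A)),
      {w | ∃ x : FreeMonoid (Option A), w = FreeMonoid.of none * x} ∈ y ∧
      ∀ a b : A, y.map (sbm a) * y.map (sbm b) = y.map (sbm a) := by
  obtain ⟨L, ⟨w, hw⟩, hid, hL⟩ := exists_left_ideal (M := Ultrafilter (FreeMonoid A))
    Ultrafilter.continuous_mul_left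
  let LV : Set (FreeMonoid (Option A)) := {w | ∃ x, w = FreeMonoid.of none * x}
  let C : Set (Ultrafilter (FreeMonoid (Option A))) := {u | LV ∈ u}
  have hC : IsClosed C := ultrafilter_isClosed_basic LV
  have hCid : ∀ u ∈ C, ∀ v, u * v ∈ C := by
    intro u hu v
    change ∀ᶠ m in ↑(u * v), m ∈ LV
    rw [Ultrafilter.eventually_mul]
    filter_upwards [hu] with m hm
    obtain ⟨x, rfl⟩ := hm
    exact Filter.Eventually.of_forall fun m' => ⟨x * m', mul_assoc _ _ _⟩
  let inc : FreeMonoid A → FreeMonoid (Option A) := FreeMonoid.map some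
  have hinc : ∀ a, sbm a ∘ inc = id := by
    intro a
    funext z
    change FreeMonoid.map _ (FreeMonoid.map _ z) = z
    rw [FreeMonoid.map_map]
    exact congrFun (congrArg DFunLike.coe (FreeMonoid.map_id (α := A))) z
  let w' := w.map inc
  obtain ⟨y, hy, hyy⟩ := exists_idempotent_in_compact_subsemigroup
    (M := Ultrafilter (FreeMonoid (Option A))) Ultrafilter.continuous_mul_left
    ((· * w') '' C) (by
      refine Set.Nonempty.image _ ⟨pure (FreeMonoid.of none * 1), ?_⟩
      exact Ultrafilter.mem_pure.2 ⟨1, rfl⟩)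
    (hC.isCompact.image (Ultrafilter.continuous_mul_left _)) (by
      rintro _ ⟨u, hu, rfl⟩ _ ⟨v, hv, rfl⟩
      exact ⟨u * w' * v, hCid _ (hCid _ hu _) _, by simp only [mul_assoc]⟩)
  obtain ⟨x, hx, rfl⟩ := hy
  have hm : ∀ a : A, ∀ U V : Ultrafilter (FreeMonoid (Option A)), (U * V).map (sbm a) = U.map (sbm a) * V.map (sbm a) := fun a U V =>
    map_mul_uf (sbm a) (fun p q => map_mul _ p q) U V
  have hmem : ∀ a : A, (x * w').map (sbm a) ∈ L := by
    intro a
    rw [hm]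
    refine hid _ _ ?_
    rw [Ultrafilter.map_map, hinc, Ultrafilter.map_id]
    exact hw
  refine ⟨x * w', hCid _ hx _, fun a b => hL _ (hmem b) ?_ _ (hmem a)⟩
  have := congrArg (Ultrafilter.map (sbm b)) hyy
  rw [hm] at this
  exact this

theorem carlson_simpson_words {A C : Type} [Finite A] [Nonempty A] [Finite C] (c : List A → C) :
    ∃ (w : List A) (x : ℕ → List (Option A)) (c0 : C), ∀ (a : ℕ → A) (j : ℕ),
      c (w ++ (List.range j).flatMap (fun i => a i :: (x i).map (fun o => o.getD (a i)))) = c0 := by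
  obtain ⟨y, hLV, hy⟩ := exists_family A
  obtain ⟨b⟩ := ‹Nonempty A›
  -- pick the colour
  obtain ⟨c0, hc0⟩ : ∃ c0, {s : FreeMonoid A | c s.toList = c0} ∈ y.map (sbm b) := by
    have : ∀ᶠ s in (y.map (sbm b) : Filter (FreeMonoid A)), ∃ c0 ∈ (Set.univ : Set C),
      c (FreeMonoid.toList s) = c0 := Filter.Eventually.of_forall fun s => ⟨_, trivial, rfl⟩
    rw [Ultrafilter.eventually_exists_mem_iff Set.finite_univ] at this
    obtain ⟨c0, _, h⟩ := this
    exact ⟨c0, h⟩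
  let P : FreeMonoid A → Prop := fun s => c s.toList = c0
  let Ps : FreeMonoid A → Prop := fun s => P s ∧ ∀ a, ∀ᶠ x in y, P (s * sbm a x)
  have key : ∀ s, ∀ a, (∀ᶠ x in y, P (s * sbm a x)) → ∀ᶠ x in y, Ps (s * sbm a x) := by
    intro s a h
    refine h.and ?_
    rw [Filter.eventually_all]
    intro a'
    have h2 : ∀ᶠ m in (y.map (sbm a) : Filter (FreeMonoid A)), P (s * m) := h
    rw [← hy a a', Ultrafilter.eventually_mul] at h2
    have h3 : ∀ᶠ x in y, ∀ᶠ x' in y, P (s * (sbm a x * sbm a' x')) := h2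
    simpa only [mul_assoc] using h3
  obtain ⟨s0, hs0⟩ : ∃ s, Ps s := by
    have h1 : ∀ᶠ x in y, P (1 * sbm b x) := by
      simp only [one_mul]
      exact hc0
    obtain ⟨x, hx⟩ := (key 1 b h1).exists
    exact ⟨_, hx⟩
  have step : ∀ F : {F : Set (FreeMonoid A) // F.Finite ∧ ∀ s ∈ F, Ps s},
      ∃ x : FreeMonoid (Option A), ∀ s ∈ F.1, ∀ a, Ps (s * sbm a (FreeMonoid.of none * x)) := by
    rintro ⟨F, hF, hFs⟩
    have h : ∀ᶠ z in y, ∀ s ∈ F, ∀ a, Ps (s * sbm a z) := by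
      rw [Filter.eventually_all_finite hF]
      intro s hs
      rw [Filter.eventually_all]
      exact fun a => key s a ((hFs s hs).2 a)
    obtain ⟨z, hz, x, rfl⟩ := (h.and hLV).exists
    exact ⟨x, hz⟩
  choose g hg using step
  let next : {F : Set (FreeMonoid A) // F.Finite ∧ ∀ s ∈ F, Ps s} →
      {F : Set (FreeMonoid A) // F.Finite ∧ ∀ s ∈ F, Ps s} := fun F =>
    ⟨⋃ a : A, (fun s => s * sbm a (FreeMonoid.of none * g F)) '' F.1,
      Set.finite_iUnion fun a => F.2.1.image _, by
        intro s hs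
        obtain ⟨a, t, ht, rfl⟩ := Set.mem_iUnion.1 hs
        exact hg F t ht a⟩
  let F : ℕ → {F : Set (FreeMonoid A) // F.Finite ∧ ∀ s ∈ F, Ps s} := fun n =>
    Nat.rec ⟨{s0}, Set.finite_singleton _, by simpa using hs0⟩ (fun _ G => next G) n
  refine ⟨s0.toList, fun n => (g (F n)).toList, c0, fun a j => ?_⟩
  have hmem : ∀ j, FreeMonoid.ofList (s0.toList ++ (List.range j).flatMap (fun i => a i ::
      ((g (F i)).toList).map (fun o => o.getD (a i)))) ∈ (F j).1 := by
    intro j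
    induction j with
    | zero =>
      change _ = _
      simp
    | succ j ih =>
      refine Set.mem_iUnion.2 ⟨a j, _, ih, ?_⟩
      rw [List.range_succ, List.flatMap_append, ← List.append_assoc, List.flatMap_singleton]
      apply FreeMonoid.toList.injective
      simp only [sbm, FreeMonoid.toList_mul, FreeMonoid.toList_map, map_mul, FreeMonoid.map_of,
        FreeMonoid.toList_of, FreeMonoid.toList_ofList]
      rfl
  exact ((F j).2.2 _ (hmem j)).1

/-- An `ω`-parameter word, given by its prefixes `P n` before the first occurrence of `n`. -/
def IsW (P : ℕ → List ℕ) : Prop :=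
  P 0 = [] ∧ ∀ n, ∃ s, (∀ x ∈ s, x ≤ n) ∧ P (n + 1) = P n ++ n :: s

/-- Substitution. -/
def sub (P : ℕ → List ℕ) (u : List ℕ) : List ℕ := (P u.length).map (fun i => u.getD i 0)

/-- Composition. -/
def comp (P Q : ℕ → List ℕ) : ℕ → List ℕ := fun n => sub P (Q n)

theorem IsW.lt {P : ℕ → List ℕ} (h : IsW P) : ∀ n, ∀ x ∈ P n, x < n := by
  intro n
  induction n with
  | zero => simp [h.1]
  | succ n ih =>
    obtain ⟨s, hs, he⟩ := h.2 n
    intro x hx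
    rw [he] at hx
    simp only [List.mem_append, List.mem_cons] at hx
    rcases hx with hx | rfl | hx
    · exact (ih x hx).trans (Nat.lt_succ_self _)
    · exact Nat.lt_succ_self _
    · exact Nat.lt_succ_of_le (hs x hx)

theorem IsW.pre {P : ℕ → List ℕ} (h : IsW P) {n m : ℕ} (hnm : n < m) :
    ∃ s, (∀ x ∈ s, x < m) ∧ P m = P n ++ n :: s := by
  have : ∃ s, P m = P n ++ n :: s := by
    induction m, hnm using Nat.le_induction with
    | base =>
      obtain ⟨s, _, he⟩ := h.2 n
      exact ⟨s, he⟩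
    | succ m _ ih =>
      obtain ⟨s, hs⟩ := ih
      obtain ⟨t, _, he⟩ := h.2 m
      exact ⟨s ++ m :: t, by rw [he, hs]; simp⟩
  obtain ⟨s, hs⟩ := this
  refine ⟨s, fun x hx => h.lt m x ?_, hs⟩
  rw [hs]
  simp [hx]

theorem IsW.length_lt {P : ℕ → List ℕ} (h : IsW P) {n m : ℕ} (hnm : n < m) :
    (P n).length < (P m).length := by
  obtain ⟨s, _, hs⟩ := h.pre hnm
  rw [hs]
  simp

theorem IsW.le_length {P : ℕ → List ℕ} (h : IsW P) (n : ℕ) : n ≤ (P n).length := by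
  induction n with
  | zero => simp
  | succ n ih => exact Nat.succ_le_of_lt (lt_of_le_of_lt ih (h.length_lt (Nat.lt_succ_self n)))

theorem getD_mem {u : List ℕ} {i : ℕ} (h : i < u.length) : u.getD i 0 ∈ u := by
  rw [List.getD_eq_getElem _ _ h]
  exact List.getElem_mem h

theorem sub_append {Q : ℕ → List ℕ} (hQ : IsW Q) (V X : List ℕ) (k : ℕ) :
    ∃ X', sub Q (V ++ k :: X) = sub Q V ++ k :: X' ∧ ∀ x ∈ X', x ∈ V ++ k :: X := by
  have hlt : V.length < (V ++ k :: X).length := by simp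
  obtain ⟨s, hs, he⟩ := hQ.pre hlt
  refine ⟨s.map (fun i => (V ++ k :: X).getD i 0), ?_, ?_⟩
  · unfold sub
    rw [he, List.map_append, List.map_cons]
    congr 1
    · apply List.map_congr_left
      intro i hi
      exact List.getD_append _ _ _ _ (hQ.lt _ _ hi)
    · congr 1
      rw [List.getD_append_right _ _ _ _ le_rfl]
      simp
  · intro x hx
    obtain ⟨i, hi, rfl⟩ := List.mem_map.1 hx
    exact getD_mem (hs i hi)

theorem sub_comp {P Q : ℕ → List ℕ} (hP : IsW P) (u : List ℕ) :
    sub (comp P Q) u = sub P (sub Q u) := by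
  unfold comp sub
  rw [List.map_map, List.length_map]
  apply List.map_congr_left
  intro i hi
  have hi' := hP.lt _ _ hi
  rw [List.getD_eq_getElem _ _ (by simpa using hi')]
  simp only [Function.comp]
  rw [List.getD_eq_getElem _ _ hi', List.getElem_map]

theorem IsW.comp {P Q : ℕ → List ℕ} (hP : IsW P) (hQ : IsW Q) : IsW (comp P Q) := by
  refine ⟨by simp [CS.comp, sub, hQ.1, hP.1], fun n => ?_⟩
  obtain ⟨s, hs, he⟩ := hQ.2 n
  obtain ⟨X, hX, hXm⟩ := sub_append hP (Q n) s n
  refine ⟨X, fun x hx => ?_, ?_⟩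
  · have := hXm x hx
    rw [← he] at this
    exact Nat.le_of_lt_succ (hQ.lt _ _ this)
  · unfold CS.comp
    rw [he, hX]

theorem isW_range : IsW List.range :=
  ⟨rfl, fun n => ⟨[], by simp, List.range_succ⟩⟩

theorem IsW.id_le {Q : ℕ → List ℕ} (hQ : IsW Q) {n i : ℕ} (hi : i ≤ n) (h : Q n = List.range n) :
    Q i = List.range i := by
  induction n, hi using Nat.le_induction with
  | base => exact h
  | succ n _ ih =>
    apply ih
    obtain ⟨s, _, he⟩ := hQ.2 n
    rw [he, List.range_succ] at h
    have h1 := hQ.le_length n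
    have h2 := congrArg List.length h
    simp at h2
    exact (List.append_inj h (by simp; omega)).1

theorem map_getD_range (u : List ℕ) : (List.range u.length).map (fun i => u.getD i 0) = u := by
  apply List.ext_getElem
  · simp
  · intro i h1 h2
    simp only [List.getElem_map, List.getElem_range]
    exact List.getD_eq_getElem _ _ h2

theorem sub_range {P : ℕ → List ℕ} (hP : IsW P) (i : ℕ) : sub P (List.range i) = P i := by
  unfold sub
  rw [List.length_range]
  conv_rhs => rw [← List.map_id (P i)]
  apply List.map_congr_left
  intro x hx
  have := hP.lt _ _ hx
  simp [List.getD_eq_getElem?_getD, this]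

/-- The colour of `P(V k X)` does not depend on `X`, for `V` of length `n`. -/
def D {C : Type} (χ : List ℕ → C) (k n : ℕ) (P : ℕ → List ℕ) : Prop :=
  ∀ V : List ℕ, V.length = n → (∀ x ∈ V, x < k) → (∀ i < k, i ∈ V) → ∀ X : List ℕ,
    (∀ x ∈ X, x ≤ k) → χ (sub P (V ++ k :: X)) = χ (sub P (V ++ [k]))

theorem D.comp {C : Type} {χ : List ℕ → C} {k n : ℕ} {P R : ℕ → List ℕ} (hD : D χ k n P)
    (hP : IsW P) (hR : IsW R) (hRn : R n = List.range n) : D χ k n (comp P R) := by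
  have key : ∀ V : List ℕ, V.length = n → (∀ x ∈ V, x < k) → (∀ i < k, i ∈ V) → ∀ X : List ℕ,
    (∀ x ∈ X, x ≤ k) → χ (sub (CS.comp P R) (V ++ k :: X)) = χ (sub P (V ++ [k])) := by
    intro V hV h1 h2 X hX
    rw [sub_comp hP]
    obtain ⟨X', he, hm⟩ := sub_append hR V X k
    have hRV : sub R V = V := by
      unfold sub
      rw [hV, hRn, ← hV]
      exact map_getD_range V
    rw [he, hRV]
    refine hD V hV h1 h2 X' fun x hx => ?_
    have := hm x hx
    simp only [List.mem_append, List.mem_cons] at this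
    rcases this with h | h | h
    · exact (h1 x h).le
    · exact h.le
    · exact hX x h
  intro V hV h1 h2 X hX
  rw [key V hV h1 h2 X hX, key V hV h1 h2 [] (by simp)]

theorem step {C : Type} [Finite C] (χ : List ℕ → C) (k n : ℕ) :
    ∃ Q, IsW Q ∧ Q n = List.range n ∧ D χ k n Q := by
  let τ : (Fin n → Fin k) → ℕ → ℕ := fun V t =>
    (List.ofFn (fun i => (V i : ℕ)) ++ [k]).getD t 0
  obtain ⟨w, x, c0, hc⟩ := carlson_simpson_words (A := Fin (n + 1))
    (C := (Fin n → Fin k) → C)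
    (fun T V => χ ((List.range (n + 1)).map (τ V) ++ T.map (fun t => τ V t.1)))
  let b : ℕ → List ℕ := fun i => if i < n then [] else if i = n then w.map Fin.val else
    (x (i - (n + 1))).map (fun o => o.elim i Fin.val)
  let Q : ℕ → List ℕ := fun m => (List.range m).flatMap (fun i => i :: b i)
  have hQs : ∀ m, Q (m + 1) = Q m ++ m :: b m := by
    intro m
    simp only [Q]
    rw [List.range_succ, List.flatMap_append, List.flatMap_singleton]
  have hb : ∀ m, ∀ z ∈ b m, z ≤ m := by
    intro m z hz
    simp only [b] at hz
    split_ifs at hz with h1 h2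
    · simp at hz
    · obtain ⟨y, _, rfl⟩ := List.mem_map.1 hz
      have := y.2
      omega
    · obtain ⟨o, _, rfl⟩ := List.mem_map.1 hz
      cases o with
      | none => exact le_rfl
      | some y =>
        have := y.2
        simp only [Option.elim]
        omega
  have hQ : IsW Q := ⟨rfl, fun m => ⟨b m, hb m, hQs m⟩⟩
  have hQle : ∀ m ≤ n, Q m = List.range m := by
    intro m hm
    induction m with
    | zero => rfl
    | succ m ih =>
      rw [hQs, ih (by omega), List.range_succ]
      have : b m = [] := if_pos (by omega)
      rw [this]
  have hQn : Q (n + 1) = List.range (n + 1) ++ w.map Fin.val := by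
    rw [hQs, hQle n le_rfl, List.range_succ]
    have : b n = w.map Fin.val := by simp [b]
    rw [this]
    simp
  have hQj : ∀ j, Q (n + 1 + j) = List.range (n + 1) ++ w.map Fin.val ++
      (List.range j).flatMap (fun i => (n + 1 + i) ::
        (x i).map (fun o => o.elim (n + 1 + i) Fin.val)) := by
    intro j
    induction j with
    | zero => simpa using hQn
    | succ j ih =>
      rw [← add_assoc, hQs, ih, List.range_succ (n := j), List.flatMap_append,
        List.flatMap_singleton]
      have : b (n + 1 + j) = (x j).map (fun o => o.elim (n + 1 + j) Fin.val) := by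
        simp only [b]
        rw [if_neg (by omega), if_neg (by omega)]
        congr 2
        omega
      rw [this]
      simp only [List.append_assoc]
  refine ⟨Q, hQ, hQle n le_rfl, ?_⟩
  intro V hV h1 h2
  let Vf : Fin n → Fin k := fun i => ⟨V[i.1]'(by omega), h1 _ (List.getElem_mem _)⟩
  have hVf : List.ofFn (fun i => (Vf i : ℕ)) = V := by
    apply List.ext_getElem
    · simp [hV]
    · intro i _ _
      simp [Vf]
  have hτ : ∀ t, τ Vf t = (V ++ [k]).getD t 0 := by
    intro t
    simp only [τ, hVf]
  have key : ∀ X : List ℕ, (∀ x ∈ X, x ≤ k) → χ (sub Q (V ++ k :: X)) = c0 Vf := by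
    intro X hX
    have hsurj : ∀ i, ∃ a : Fin (n + 1), τ Vf a = X.getD i 0 := by
      intro i
      have hle : X.getD i 0 ≤ k := by
        by_cases hi : i < X.length
        · exact hX _ (getD_mem hi)
        · rw [List.getD_eq_default _ _ (by omega)]
          omega
      have hm : X.getD i 0 ∈ V ++ [k] := by
        rcases hle.lt_or_eq with h | h
        · exact List.mem_append_left _ (h2 _ h)
        · rw [h]
          simp
      obtain ⟨t, ht, he⟩ := List.getElem_of_mem hm
      refine ⟨⟨t, by simpa [hV] using ht⟩, ?_⟩
      rw [hτ, List.getD_eq_getElem _ _ ht, he]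
    choose a ha using hsurj
    rw [← hc a X.length]
    simp only
    congr 1
    unfold sub
    have hlen : (V ++ k :: X).length = n + 1 + X.length := by
      simp [hV]
      omega
    have hσ1 : ∀ t, t < n + 1 → (V ++ k :: X).getD t 0 = τ Vf t := by
      intro t ht
      rw [hτ]
      have : V ++ k :: X = (V ++ [k]) ++ X := by simp
      rw [this, List.getD_append _ _ _ _ (by simpa [hV] using ht)]
    have hσ2 : ∀ i, (V ++ k :: X).getD (n + 1 + i) 0 = τ Vf (a i) := by
      intro i
      rw [ha]
      have : V ++ k :: X = (V ++ [k]) ++ X := by simp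
      rw [this, List.getD_append_right _ _ _ _ (by simp [hV])]
      congr 1
      simp [hV]
    rw [hlen, hQj, List.append_assoc, List.map_append]
    congr 1
    · apply List.map_congr_left
      intro t ht
      exact hσ1 t (List.mem_range.1 ht)
    · rw [List.map_append, List.map_append]
      congr 1
      · rw [List.map_map]
        apply List.map_congr_left
        intro t _
        exact hσ1 t.1 t.2
      · rw [List.map_flatMap, List.map_flatMap]
        congr 1
        funext i
        rw [List.map_cons, List.map_cons, hσ2, List.map_map, List.map_map]
        congr 1
        apply List.map_congr_left
        intro o _
        cases o with
        | none => exact hσ2 i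
        | some t => exact hσ1 t.1 t.2
  intro X hX
  rw [key X hX, key [] (by simp)]

theorem fusion {C : Type} [Finite C] (χ : List ℕ → C) (k : ℕ) :
    ∃ P, IsW P ∧ ∀ n, D χ k n P := by
  have h : ∀ (n : ℕ) (P : {P // IsW P}), ∃ Q, IsW Q ∧ Q n = List.range n ∧
      D χ k n (comp P.1 Q) := by
    rintro n ⟨P, hP⟩
    obtain ⟨Q, hQ, hQn, hD⟩ := step (fun u => χ (sub P u)) k n
    refine ⟨Q, hQ, hQn, ?_⟩
    intro V hV h1 h2 X hX
    rw [sub_comp hP, sub_comp hP]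
    exact hD V hV h1 h2 X hX
  choose G hG1 hG2 hG3 using h
  let S : ℕ → {P // IsW P} := fun n =>
    Nat.rec ⟨List.range, isW_range⟩ (fun n P => ⟨comp P.1 (G n P), P.2.comp (hG1 n P)⟩) n
  have hS : ∀ m, (S (m + 1)).1 = comp (S m).1 (G m (S m)) := fun m => rfl
  have hst1 : ∀ m i, i ≤ m → (S (m + 1)).1 i = (S m).1 i := by
    intro m i hi
    rw [hS]
    unfold comp
    rw [(hG1 m (S m)).id_le hi (hG2 m (S m)), sub_range (S m).2]
  have hst : ∀ n m, n ≤ m → (S m).1 n = (S n).1 n := by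
    intro n m hm
    induction m, hm using Nat.le_induction with
    | base => rfl
    | succ m hm ih => rw [hst1 m n hm, ih]
  have hD : ∀ n m, n + 1 ≤ m → D χ k n (S m).1 := by
    intro n m hm
    induction m, hm using Nat.le_induction with
    | base => exact hG3 n (S n)
    | succ m hm ih =>
      rw [hS]
      exact ih.comp (S m).2 (hG1 m (S m)) ((hG1 m (S m)).id_le (by omega) (hG2 m (S m)))
  refine ⟨fun n => (S n).1 n, ⟨(S 0).2.1, fun n => ?_⟩, fun n => ?_⟩
  · obtain ⟨s, hs, he⟩ := (S (n + 1)).2.2 n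
    exact ⟨s, hs, by rw [hst1 n n le_rfl] at he; exact he⟩
  · intro V hV h1 h2 X hX
    have e : ∀ u : List ℕ, u.length ≤ n + 1 + X.length →
        sub (fun n => (S n).1 n) u = sub (S (n + 1 + X.length)).1 u := by
      intro u hu
      unfold sub
      rw [hst _ _ hu]
    rw [e _ (by simp [hV]; omega), e _ (by simp [hV])]
    exact hD n _ (by omega) V hV h1 h2 X hX

/-- Recursive description of `k`-parameter words. -/
def Good : ℕ → List ℕ → Prop
  | 0, u => u = []
  | k + 1, u => ∃ V X, Good k V ∧ u = V ++ k :: X ∧ ∀ x ∈ X, x ≤ k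

theorem Good.lt : ∀ {k : ℕ} {u : List ℕ}, Good k u → ∀ x ∈ u, x < k := by
  intro k
  induction k with
  | zero =>
    rintro u rfl
    simp
  | succ k ih =>
    rintro u ⟨V, X, hV, rfl, hX⟩ x hx
    simp only [List.mem_append, List.mem_cons] at hx
    rcases hx with h | h | h
    · have := ih hV x h
      omega
    · omega
    · have := hX x h
      omega

theorem Good.mem : ∀ {k : ℕ} {u : List ℕ}, Good k u → ∀ i < k, i ∈ u := by
  intro k
  induction k with
  | zero =>
    intro u _ i hi
    omega
  | succ k ih =>
    rintro u ⟨V, X, hV, rfl, hX⟩ i hi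
    rcases Nat.lt_succ_iff_lt_or_eq.1 hi with h | h
    · exact List.mem_append_left _ (ih hV i h)
    · simp [h]

theorem Good.sub {Q : ℕ → List ℕ} (hQ : IsW Q) :
    ∀ {k : ℕ} {u : List ℕ}, Good k u → Good k (sub Q u) := by
  intro k
  induction k with
  | zero =>
    rintro u rfl
    simp [Good, CS.sub, hQ.1]
  | succ k ih =>
    intro u hu
    have hlt := hu.lt
    obtain ⟨V, X, hV, rfl, hX⟩ := hu
    obtain ⟨X', he, hm⟩ := sub_append hQ V X k
    exact ⟨_, X', ih hV, he, fun x hx => Nat.le_of_lt_succ (hlt x (hm x hx))⟩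

theorem good_of_isPWord0 : ∀ {k : ℕ} {u : List ℕ}, IsPWord0 k u → Good k u := by
  intro k
  induction k with
  | zero =>
    rintro u ⟨h, _⟩
    refine List.eq_nil_iff_forall_not_mem.2 fun x hx => ?_
    have := h x hx
    omega
  | succ k ih =>
    rintro u ⟨h1, h2, h3⟩
    obtain ⟨V, X, rfl, hk⟩ := List.eq_append_cons_of_mem (h2 k (Nat.lt_succ_self k))
    have hp : ∀ i j : ℕ, i < j → ∀ p, p ≤ V.length → (V ++ k :: X)[p]? = some j →
        ∃ q, q < p ∧ V[q]? = some i := by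
      intro i j hij p hp hpj
      obtain ⟨hlt, hpe⟩ := List.getElem?_eq_some_iff.1 hpj
      obtain ⟨q, hq, hqi⟩ := h3 i j hij ⟨p, hlt⟩ (by simpa using hpe)
      have hq' : q.1 < p := hq
      refine ⟨q.1, hq', ?_⟩
      rw [← List.getElem?_append_left (l₂ := k :: X) (by omega)]
      exact List.getElem?_eq_some_iff.2 ⟨q.2, by simpa using hqi⟩
    refine ⟨V, X, ih ⟨?_, ?_, ?_⟩, rfl, fun x hx => Nat.le_of_lt_succ (h1 x (by simp [hx]))⟩
    · intro i hi
      have := h1 i (by simp [hi])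
      have : i ≠ k := by
        rintro rfl
        exact hk hi
      omega
    · intro i hi
      obtain ⟨q, _, hq⟩ := hp i k hi V.length le_rfl (by simp)
      exact List.mem_of_getElem? hq
    · intro i j hij p hpj
      obtain ⟨q, hq, hqi⟩ := hp i j hij p.1 p.2.le (by
        rw [List.getElem?_append_left p.2]
        exact List.getElem?_eq_some_iff.2 ⟨p.2, by simpa using hpj⟩)
      obtain ⟨hlt, hqe⟩ := List.getElem?_eq_some_iff.1 hqi
      exact ⟨⟨q, hlt⟩, hq, by simpa using hqe⟩

theorem main {C : Type} [Finite C] : ∀ (k : ℕ) (χ : List ℕ → C),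
    ∃ P, IsW P ∧ ∃ c, ∀ u, Good k u → χ (sub P u) = c := by
  intro k
  induction k with
  | zero =>
    intro χ
    refine ⟨List.range, isW_range, χ (sub List.range []), ?_⟩
    rintro u rfl
    rfl
  | succ k ih =>
    intro χ
    obtain ⟨P, hP, hD⟩ := fusion χ k
    obtain ⟨Q, hQ, c, hc⟩ := ih (fun V => χ (sub P (V ++ [k])))
    refine ⟨comp P Q, hP.comp hQ, c, ?_⟩
    intro u hu
    have hu' := hu.sub hQ
    have hlt := hu'.lt
    rw [sub_comp hP]
    obtain ⟨V, X, hV, rfl, hX⟩ := hu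
    obtain ⟨X', he, hm⟩ := sub_append hQ V X k
    rw [he] at hlt ⊢
    rw [hD _ (sub Q V) rfl (hV.sub hQ).lt (hV.sub hQ).mem X'
      (fun x hx => Nat.le_of_lt_succ (hlt x (by simp [hx])))]
    exact hc V hV

theorem to_inf {P : ℕ → List ℕ} (hP : IsW P) : ∃ W : ℕ → ℕ, InfPW0 W ∧
    ∀ u (h : ∃ p, u.length ≤ W p), substInf0 W u h = sub P u := by
  let W : ℕ → ℕ := fun p => (P (p + 1)).getD p 0
  have hpre : ∀ n m, n ≤ m → ∃ s, P m = P n ++ s := by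
    intro n m hnm
    rcases hnm.lt_or_eq with h | rfl
    · obtain ⟨s, _, hs⟩ := hP.pre h
      exact ⟨_, hs⟩
    · exact ⟨[], by simp⟩
  have hW : ∀ n p, p < (P n).length → W p = (P n).getD p 0 := by
    intro n p hp
    have hp2 : p < (P (p + 1)).length := hP.le_length (p + 1)
    rcases le_total n (p + 1) with h | h
    · obtain ⟨s, hs⟩ := hpre _ _ h
      simp only [W]
      rw [hs, List.getD_append _ _ _ _ hp]
    · obtain ⟨s, hs⟩ := hpre _ _ h
      simp only [W]
      rw [hs, List.getD_append _ _ _ _ hp2]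
  have hWlt : ∀ n p, p < (P n).length → W p < n := by
    intro n p hp
    rw [hW n p hp]
    exact hP.lt _ _ (getD_mem hp)
  have hWeq : ∀ n, W (P n).length = n := by
    intro n
    rw [hW (n + 1) _ (hP.length_lt (Nat.lt_succ_self n))]
    obtain ⟨s, _, hs⟩ := hP.2 n
    rw [hs, List.getD_append_right _ _ _ _ le_rfl]
    simp
  refine ⟨W, ⟨fun i => ⟨_, hWeq i⟩, ?_⟩, ?_⟩
  · intro i j hij p hp
    refine ⟨(P i).length, ?_, hWeq i⟩
    refine lt_of_lt_of_le (hP.length_lt hij) ?_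
    by_contra! hlt
    have := hWlt j p hlt
    omega
  · intro u h
    have hf : Nat.find h = (P u.length).length := by
      rw [Nat.find_eq_iff]
      refine ⟨(hWeq _).ge, fun p hp => ?_⟩
      have := hWlt _ p hp
      omega
    unfold substInf0 sub
    rw [hf]
    conv_rhs => rw [← map_getD_range (P u.length)]
    rw [List.map_map]
    apply List.map_congr_left
    intro p hp
    simp only [Function.comp]
    rw [hW u.length p (List.mem_range.1 hp)]

end CS

/-- The infinitary dual Ramsey theorem (special case of Carlson–Simpson): for every
finite colouring of all finite-length `k`-parameter words over the empty alphabet there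
is an infinite `ω`-parameter word `W` such that `{W(U) : U a k-parameter word}` is
monochromatic. -/
theorem carlson_simpson_special (k r : ℕ) (χ : List ℕ → Fin r) :
    ∃ W : ℕ → ℕ, InfPW0 W ∧ ∃ c : Fin r,
      ∀ u : List ℕ, IsPWord0 k u → ∀ h : ∃ p, u.length ≤ W p,
        χ (substInf0 W u h) = c := by
  obtain ⟨P, hP, c, hc⟩ := CS.main k χ
  obtain ⟨W, hW, hs⟩ := CS.to_inf hP
  refine ⟨W, hW, c, fun u hu h => ?_⟩
  rw [hs u h]
  exact hc u (CS.good_of_isPWord0 hu)
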